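/- Let F be a field of characteristic 2 and let B₁, B₂ be anisotropic bilinear n-fold Pfister forms over F such that for every γ ∈ F×, ⟨⟨γ⟩⟩_b is a factor of B₁ if and only if it is a factor of B₂. Then B₁ ≅ B₂. -/

import Mathlib

/-- The subfield of squares `F²` of a field of characteristic 2. -/
def sqSubfield (F : Type*) [Field F] [CharP F 2] : Subfield F where
  carrier := {x | ∃ y : F, y ^ 2 = x}
  mul_mem' := by rintro a b ⟨y, rfl⟩ ⟨z, rfl⟩; exact ⟨y * z, by ring⟩
  one_mem' := ⟨1, one_pow 2⟩
  add_mem' := by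
    rintro a b ⟨y, rfl⟩ ⟨z, rfl⟩
    exact ⟨y + z, by rw [add_sq]; linear_combination (y*z) * (CharP.cast_eq_zero F 2)⟩
  zero_mem' := ⟨0, by ring⟩
  neg_mem' := by rintro a ⟨y, rfl⟩; exact ⟨y, (CharTwo.neg_eq _).symm⟩
  inv_mem' := by rintro a ⟨y, rfl⟩; exact ⟨y⁻¹, by rw [inv_pow]⟩

/-- The monomial `β₁^{d₁} ⋯ βₙ^{dₙ}`. -/
def mono {R : Type*} [CommRing R] {n : ℕ} (β : Fin n → R) (d : Fin n → Bool) : R :=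
  ∏ i, if d i then β i else 1

/-- The diagonal bilinear `n`-fold Pfister form `⟨⟨β₁,…,βₙ⟩⟩_b`. -/
def bPf (F : Type*) [Field F] {n : ℕ} (β : Fin n → F) (v w : (Fin n → Bool) → F) : F :=
  ∑ d, mono β d * v d * w d

/-- Pure part of the bilinear Pfister form. -/
def bPfPure (F : Type*) [Field F] {n : ℕ} (β : Fin n → F)
    (v w : {d : Fin n → Bool // d ≠ fun _ => false} → F) : F :=
  ∑ d, mono β d.1 * v d * w d

/-- Anisotropy of a bilinear form. -/
def BAniso (F : Type*) [Field F] {V : Type*} [AddCommGroup V] [Module F V]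
    (B : V → V → F) : Prop :=
  ∀ v : V, v ≠ 0 → B v v ≠ 0

/-- Isometry of bilinear forms. -/
def BilinIsom (F : Type*) [Field F] {V W : Type*} [AddCommGroup V] [Module F V]
    [AddCommGroup W] [Module F W] (B₁ : V → V → F) (B₂ : W → W → F) : Prop :=
  ∃ e : V ≃ₗ[F] W, ∀ v w, B₂ (e v) (e w) = B₁ v w

/-- Isometry of quadratic forms (given as value functions). -/
def QuadIsom (F : Type*) [Field F] {V W : Type*} [AddCommGroup V] [Module F V]
    [AddCommGroup W] [Module F W] (q₁ : V → F) (q₂ : W → F) : Prop :=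
  ∃ e : V ≃ₗ[F] W, ∀ v, q₂ (e v) = q₁ v

/-- The quadratic Pfister form `⟨⟨β₁,…,β_m, a]]` as a value function. -/
def qPf (R : Type*) [CommRing R] {m : ℕ} (β : Fin m → R) (a : R)
    (x : (Fin m → Bool) → R × R) : R :=
  ∑ e, mono β e * ((x e).1 ^ 2 + (x e).1 * (x e).2 + a * (x e).2 ^ 2)

/-- Minimal index where `d` is `true`. -/
noncomputable def minIdx {n : ℕ} (d : Fin n → Bool) (hd : d ≠ fun _ => false) : Fin n :=
  (Finset.univ.filter fun i => d i = true).min' (by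
    obtain ⟨i, hi⟩ := Function.ne_iff.mp hd
    exact ⟨i, Finset.mem_filter.mpr ⟨Finset.mem_univ i, by simpa using hi⟩⟩)

/-- Remove the `ℓ`-th entry from a tuple. -/
def removeIdx {R : Type*} {n : ℕ} (α : Fin n → R) (ℓ : Fin n) (i : Fin (n - 1)) : R :=
  if h : (i : ℕ) < (ℓ : ℕ) then α ⟨i, by omega⟩ else α ⟨(i : ℕ) + 1, by omega⟩

/-- First `n-1` entries of a tuple. -/
def front {R : Type*} {n : ℕ} (α : Fin n → R) (i : Fin (n - 1)) : R :=
  α ⟨i, by omega⟩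

/-- Last entry of a tuple (junk value `0` if the tuple is empty). -/
def qlast {R : Type*} [CommRing R] {n : ℕ} (α : Fin n → R) : R :=
  if h : n = 0 then 0 else α ⟨n - 1, by omega⟩

/-!
Expanding the form `B` with slots `β` along the monomials `x^d` turns its underlying space into
the algebra `A = F[x₁, …, xₙ] / (xᵢ² - βᵢ)`, in which `B(u, w)` is the constant coefficient of
`u * w` and, in characteristic 2, `u² = B(u, u)`. If `B` is anisotropic, `u` is therefore
determined by `B(u, u)`, and `B(u, w) = 0` as soon as `B(u, u) * B(w, w)` is the square of an
element with zero constant coefficient, that is, a value of the pure part of `B`.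

Every nontrivial monomial in the slots of `B₁` is a slot of `B₁`. If it is then also a slot of
`B₂`, it is a value of the pure part of `B₂`. Vectors representing all these monomials by `B₂`
are pairwise orthogonal, since up to squares the product of two different monomials is again a
nontrivial monomial; so they form an orthogonal basis on which `B₂` takes the diagonal entries
of `B₁`.
-/

open scoped symmDiff

section Monomials

variable {R : Type*} [CommRing R] {n : ℕ}

theorem mono_bot (β : Fin n → R) : mono β ⊥ = 1 := by
  simp [mono]

theorem mono_mul_mono (β : Fin n → R) (d e : Fin n → Bool) :
    mono β d * mono β e = mono β (d ∆ e) * mono β (d ⊓ e) ^ 2 := by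
  simp only [mono, ← Finset.prod_pow, ← Finset.prod_mul_distrib]
  refine Finset.prod_congr rfl fun i _ => ?_
  cases hd : d i <;> cases he : e i <;> simp [hd, he, pow_two]

theorem mono_cons (γ : R) (ψ : Fin n → R) (e : Fin (n + 1) → Bool) :
    mono (Fin.cons γ ψ : Fin (n + 1) → R) e = (if e 0 then γ else 1) * mono ψ (Fin.tail e) := by
  simp only [mono, Fin.prod_univ_succ, Fin.cons_zero, Fin.cons_succ]
  rfl

theorem mono_insertNth_false (β : Fin (n + 1) → R) (i : Fin (n + 1)) (e : Fin n → Bool) :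
    mono β (i.insertNth (α := fun _ => Bool) false e) = mono (i.removeNth β) e := by
  simp [mono, Fin.prod_univ_succAbove _ i, Fin.removeNth]

theorem mono_ne_zero [IsDomain R] {β : Fin n → R} (hβ : ∀ i, β i ≠ 0) (d : Fin n → Bool) :
    mono β d ≠ 0 := by
  refine Finset.prod_ne_zero_iff.mpr fun i _ => ?_
  split_ifs
  exacts [hβ i, one_ne_zero]

end Monomials

section BilinearForms

variable {F : Type*} [Field F] {V : Type*} [AddCommGroup V] [Module F V]

theorem BilinIsom.symm {W : Type*} [AddCommGroup W] [Module F W] {B₁ : V → V → F}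
    {B₂ : W → W → F} (h : BilinIsom F B₁ B₂) : BilinIsom F B₂ B₁ := by
  obtain ⟨e, he⟩ := h
  exact ⟨e.symm, fun v w => by simp [← he]⟩

theorem BAniso.injective_apply_self [CharP F 2] {B : LinearMap.BilinForm F V}
    (h : BAniso F fun v w => B v w) (hB : B.IsSymm) : Function.Injective fun v => B v v := by
  intro u v huv
  by_contra huv_ne
  refine h (u - v) (sub_ne_zero.mpr huv_ne) ?_
  have hcomm : B u v = B v u := hB.eq u v
  calc B (u - v) (u - v) = B u u + B v v - 2 * B v u := by
        simp only [map_sub, LinearMap.sub_apply, hcomm]; ring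
    _ = B v v + B v v := by simp only [show B u u = B v v from huv, CharTwo.two_eq_zero]; ring
    _ = 0 := CharTwo.add_self_eq_zero _

theorem bilinIsom_diagonal_of_isOrthoᵢ {ι : Type*} [Fintype ι] [Nonempty ι]
    {B : LinearMap.BilinForm F V} {u : ι → V} (hu : B.IsOrthoᵢ u) {a : ι → F}
    (ha : ∀ i, a i ≠ 0) (hua : ∀ i, B (u i) (u i) = a i)
    (hcard : Fintype.card ι = Module.finrank F V) :
    BilinIsom F (fun v w : ι → F => ∑ i, a i * v i * w i) (fun v w => B v w) := by
  have hind : LinearIndependent F u :=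
    LinearMap.linearIndependent_of_isOrthoᵢ hu fun i => (hua i).symm ▸ ha i
  let b := basisOfLinearIndependentOfCardEqFinrank hind hcard
  refine ⟨b.equivFun.symm, fun v w => ?_⟩
  simp only [b, Module.Basis.equivFun_symm_apply, coe_basisOfLinearIndependentOfCardEqFinrank,
    map_sum, LinearMap.sum_apply, map_smul, LinearMap.smul_apply, smul_eq_mul]
  refine Finset.sum_congr rfl fun i _ => ?_
  rw [Finset.sum_eq_single i (fun j _ hji => by rw [hu hji]; ring) (by simp), hua]
  ring

end BilinearForms

section PfisterForm

variable {F : Type*} [Field F] {n : ℕ}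

/-- The form `bPf F β` bundled as a bilinear form. -/
noncomputable def bPfForm (β : Fin n → F) : LinearMap.BilinForm F ((Fin n → Bool) → F) :=
  (Matrix.diagonal (mono β)).toBilin'

theorem bPfForm_apply (β : Fin n → F) (v w : (Fin n → Bool) → F) :
    bPfForm β v w = bPf F β v w := by
  simp only [bPfForm, Matrix.toBilin'_apply', Matrix.mulVec_diagonal, dotProduct, bPf]
  exact Finset.sum_congr rfl fun _ _ => by ring

theorem bPfForm_isSymm (β : Fin n → F) : (bPfForm β).IsSymm :=
  Matrix.isSymm_toBilin'_iff_isSymm.mpr (Matrix.isSymm_diagonal _)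

theorem bPf_single (β : Fin n → F) (v : (Fin n → Bool) → F) (d : Fin n → Bool) :
    bPf F β v (Pi.single d 1) = mono β d * v d := by
  simp [bPf, Pi.single_apply]

theorem bPf_single_bot (β : Fin n → F) (v : (Fin n → Bool) → F) :
    bPf F β v (Pi.single ⊥ 1) = v ⊥ := by
  rw [bPf_single, mono_bot, one_mul]

theorem bPf_injective_apply_self [CharP F 2] {β : Fin n → F} (h : BAniso F (bPf F β)) :
    Function.Injective fun v => bPf F β v v := by
  simp only [← bPfForm_apply]
  refine BAniso.injective_apply_self ?_ (bPfForm_isSymm β)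
  simpa only [bPfForm_apply] using h

theorem bilinIsom_bPf_of_isOrthoᵢ {β₁ β₂ : Fin n → F} (hβ₁ : ∀ i, β₁ i ≠ 0)
    {u : (Fin n → Bool) → (Fin n → Bool) → F} (hu : (bPfForm β₂).IsOrthoᵢ u)
    (hu_self : ∀ d, bPf F β₂ (u d) (u d) = mono β₁ d) :
    BilinIsom F (bPf F β₁) (bPf F β₂) := by
  simp only [← bPfForm_apply β₂] at hu_self
  obtain ⟨e, he⟩ := bilinIsom_diagonal_of_isOrthoᵢ hu (mono_ne_zero hβ₁) hu_self (by simp)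
  exact ⟨e, fun v w => (bPfForm_apply β₂ _ _).symm.trans (he v w)⟩

end PfisterForm

section Multiplication

variable {F : Type*} [Field F] {n : ℕ}

/-- The product of two elements of `F[x₁, …, xₙ] / (xᵢ² - βᵢ)`, given by their coefficients with
respect to the monomials `x^d`: the coefficient of `x^t` collects the products of monomials
`x^a * x^(a ∆ t) = mono β (a ⊓ (a ∆ t)) * x^t`. -/
def pfMul (β : Fin n → F) (u w : (Fin n → Bool) → F) (t : Fin n → Bool) : F :=
  ∑ a, u a * w (a ∆ t) * mono β (a ⊓ (a ∆ t))

theorem pfMul_bot (β : Fin n → F) (u w : (Fin n → Bool) → F) :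
    pfMul β u w ⊥ = bPf F β u w := by
  simp only [pfMul, bPf, symmDiff_bot, inf_idem]
  exact Finset.sum_congr rfl fun _ _ => by ring

theorem bPf_pfMul_self [CharP F 2] (β : Fin n → F) (u w : (Fin n → Bool) → F) :
    bPf F β (pfMul β u w) (pfMul β u w) = bPf F β u u * bPf F β w w := by
  have hmono (a t : Fin n → Bool) :
      mono β a * mono β (a ∆ t) = mono β t * mono β (a ⊓ (a ∆ t)) ^ 2 := by
    rw [mono_mul_mono, symmDiff_symmDiff_cancel_left]
  calc bPf F β (pfMul β u w) (pfMul β u w)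
      = ∑ t, mono β t * (∑ a, u a * w (a ∆ t) * mono β (a ⊓ (a ∆ t))) ^ 2 := by
        simp only [bPf, pfMul, pow_two, mul_assoc]
    _ = ∑ a, ∑ t, mono β t * (u a * w (a ∆ t) * mono β (a ⊓ (a ∆ t))) ^ 2 := by
        simp only [CharTwo.sum_sq, Finset.mul_sum]
        exact Finset.sum_comm
    _ = ∑ a, ∑ t, (mono β a * u a * u a) * (mono β (a ∆ t) * w (a ∆ t) * w (a ∆ t)) := by
        refine Finset.sum_congr rfl fun a _ => Finset.sum_congr rfl fun t _ => ?_
        linear_combination (-(u a ^ 2) * w (a ∆ t) ^ 2) * hmono a t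
    _ = ∑ a, ∑ b, (mono β a * u a * u a) * (mono β b * w b * w b) :=
        Finset.sum_congr rfl fun a _ => Equiv.sum_comp (symmDiff_right_involutive a).toPerm
          fun b => (mono β a * u a * u a) * (mono β b * w b * w b)
    _ = bPf F β u u * bPf F β w w := (Finset.sum_mul_sum _ _ _ _).symm

end Multiplication

section PureValues

variable {F : Type*} [Field F] {n : ℕ}

/-- `γ` is a value `B'(v, v)` of the pure part `B'` of the Pfister form with slots `β`. The pure
part is realised as the hyperplane of vectors whose constant coefficient vanishes, and `γ = 0` is
always allowed. -/
def IsPureValue (β : Fin n → F) (γ : F) : Prop :=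
  ∃ v : (Fin n → Bool) → F, v ⊥ = 0 ∧ bPf F β v v = γ

theorem IsPureValue.mul_sq {β : Fin n → F} {γ : F} (h : IsPureValue β γ) (c : F) :
    IsPureValue β (γ * c ^ 2) := by
  obtain ⟨v, hv, rfl⟩ := h
  refine ⟨c • v, by simp [hv], ?_⟩
  simp only [← bPfForm_apply, map_smul, LinearMap.smul_apply, smul_eq_mul]
  ring

theorem isPureValue_cons (γ : F) (ψ : Fin n → F) :
    IsPureValue (Fin.cons γ ψ : Fin (n + 1) → F) γ := by
  let d : Fin (n + 1) → Bool := Fin.cons true ⊥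
  have hd : ⊥ ≠ d := fun h => by simpa [d] using congrFun h 0
  refine ⟨Pi.single d 1, Pi.single_eq_of_ne hd 1, ?_⟩
  rw [bPf_single, mono_cons, Pi.single_eq_same]
  simp [d, mono_bot]

theorem bPf_eq_zero_of_isPureValue_mul [CharP F 2] {β : Fin n → F} (h : BAniso F (bPf F β))
    {u w : (Fin n → Bool) → F} (huw : IsPureValue β (bPf F β u u * bPf F β w w)) :
    bPf F β u w = 0 := by
  obtain ⟨z, hz, hzz⟩ := huw
  have hmul : pfMul β u w = z := bPf_injective_apply_self h ((bPf_pfMul_self β u w).trans hzz.symm)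
  rw [← pfMul_bot, hmul, hz]

theorem IsPureValue.of_bilinIsom [CharP F 2] {m : ℕ} {β : Fin n → F} {β' : Fin m → F}
    (h : BAniso F (bPf F β)) (hiso : BilinIsom F (bPf F β') (bPf F β)) {γ : F}
    (hγ : IsPureValue β' γ) : IsPureValue β γ := by
  obtain ⟨e, he⟩ := hiso
  obtain ⟨v, hv, rfl⟩ := hγ
  have he_one : e (Pi.single ⊥ 1) = Pi.single ⊥ 1 := by
    apply bPf_injective_apply_self h
    simp only [he, bPf_single_bot, Pi.single_eq_same]
  refine ⟨e v, ?_, he v v⟩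
  rw [← bPf_single_bot β (e v), ← he_one, he, bPf_single_bot, hv]

theorem bilinIsom_of_isPureValue_mono [CharP F 2] {β₁ β₂ : Fin n → F} (hβ₁ : ∀ i, β₁ i ≠ 0)
    (h₂ : BAniso F (bPf F β₂)) (hpure : ∀ d, d ≠ ⊥ → IsPureValue β₂ (mono β₁ d)) :
    BilinIsom F (bPf F β₁) (bPf F β₂) := by
  have hvalue (d : Fin n → Bool) : ∃ u, bPf F β₂ u u = mono β₁ d := by
    obtain rfl | hd := eq_or_ne d ⊥
    · exact ⟨Pi.single ⊥ 1, by rw [bPf_single_bot, mono_bot, Pi.single_eq_same]⟩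
    · obtain ⟨u, -, hu⟩ := hpure d hd
      exact ⟨u, hu⟩
  choose u hu using hvalue
  refine bilinIsom_bPf_of_isOrthoᵢ hβ₁ (fun a b hab => ?_) hu
  refine (bPfForm_apply _ _ _).trans (bPf_eq_zero_of_isPureValue_mul h₂ ?_)
  rw [hu, hu, mono_mul_mono]
  exact (hpure _ (symmDiff_eq_bot.not.mpr hab)).mul_sq _

end PureValues

section Slots

variable {F : Type*} [Field F] {n : ℕ}

/-- `⟨⟨γ⟩⟩_b` is a factor of the `n`-fold Pfister form with slots `β`. For `n = 0` this is never
satisfied, as the two forms then have different dimensions. -/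
def IsSlot (β : Fin n → F) (γ : F) : Prop :=
  ∃ ψ : Fin (n - 1) → F, (∀ i, ψ i ≠ 0) ∧ BilinIsom F (bPf F β) (bPf F (Fin.cons γ ψ))

theorem IsSlot.isPureValue [CharP F 2] {β : Fin n → F} (h : BAniso F (bPf F β)) {γ : F}
    (hγ : IsSlot β γ) : IsPureValue β γ := by
  obtain ⟨ψ, -, hψ⟩ := hγ
  exact (isPureValue_cons γ ψ).of_bilinIsom h hψ.symm

theorem bilinIsom_bPf_of_mono_eq {β₁ β₂ : Fin n → F} (hβ₁ : ∀ i, β₁ i ≠ 0)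
    {σ : (Fin n → Bool) → (Fin n → Bool)} (hσ : Function.Injective σ) {c : (Fin n → Bool) → F}
    (hc : ∀ e, mono β₁ e = mono β₂ (σ e) * c e ^ 2) :
    BilinIsom F (bPf F β₁) (bPf F β₂) := by
  refine bilinIsom_bPf_of_isOrthoᵢ (u := fun e => c e • Pi.single (σ e) 1) hβ₁
    (fun a b hab => ?_) fun e => ?_
  · simp [Function.onFun, bPfForm_apply, bPf_single,
      Pi.single_eq_of_ne (hσ.ne hab).symm]
  · simp only [← bPfForm_apply, map_smul, LinearMap.smul_apply, smul_eq_mul]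
    rw [bPfForm_apply, bPf_single, Pi.single_eq_same, hc]
    ring

/-- The exponent, reduced modulo 2, of the monomial `e` in the slots obtained from `β` by removing
`β i` and prepending `mono β d`, expressed as a monomial in `β`. -/
def slotExponent (d : Fin (n + 1) → Bool) (i : Fin (n + 1)) (e : Fin (n + 1) → Bool) :
    Fin (n + 1) → Bool :=
  (if e 0 then d else ⊥) ∆ i.insertNth (α := fun _ => Bool) false (Fin.tail e)

theorem slotExponent_injective {d : Fin (n + 1) → Bool} {i : Fin (n + 1)} (hi : d i = true) :
    Function.Injective (slotExponent d i) := by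
  have happly (e : Fin (n + 1) → Bool) : slotExponent d i e i = e 0 := by
    cases he : e 0 <;> simp [slotExponent, he, hi]
  intro e e' h
  have hhead : e 0 = e' 0 := by rw [← happly e, ← happly e', h]
  have htail : Fin.tail e = Fin.tail e' := by
    rw [slotExponent, slotExponent, hhead, symmDiff_right_inj] at h
    exact Fin.insertNth_right_injective _ h
  rw [← Fin.cons_self_tail e, ← Fin.cons_self_tail e', hhead, htail]

theorem mono_cons_mono_removeNth (β : Fin (n + 1) → F) (d : Fin (n + 1) → Bool)
    (i : Fin (n + 1)) (e : Fin (n + 1) → Bool) :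
    mono (Fin.cons (mono β d) (i.removeNth β) : Fin (n + 1) → F) e =
      mono β (slotExponent d i e) *
        mono β ((if e 0 then d else ⊥) ⊓
          i.insertNth (α := fun _ => Bool) false (Fin.tail e)) ^ 2 := by
  rw [slotExponent, ← mono_mul_mono, mono_cons, mono_insertNth_false, apply_ite (mono β), mono_bot]

theorem isSlot_mono {β : Fin n → F} (hβ : ∀ i, β i ≠ 0) {d : Fin n → Bool} (hd : d ≠ ⊥) :
    IsSlot β (mono β d) := by
  obtain ⟨i, hi⟩ := Function.ne_iff.mp hd
  obtain _ | n := n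
  · exact i.elim0
  have hcons : ∀ j, (Fin.cons (mono β d) (i.removeNth β) : Fin (n + 1) → F) j ≠ 0 :=
    Fin.cases (mono_ne_zero hβ d) fun _ => hβ _
  refine ⟨i.removeNth β, fun _ => hβ _, ?_⟩
  exact (bilinIsom_bPf_of_mono_eq hcons (slotExponent_injective (by simpa using hi))
    (mono_cons_mono_removeNth β d i)).symm

end Slots

theorem stmt_7_general {F : Type*} [Field F] [CharP F 2] {n : ℕ} {β₁ β₂ : Fin n → F}
    (hβ₁ : ∀ i, β₁ i ≠ 0) (h₂ : BAniso F (bPf F β₂))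
    (hslots : ∀ γ : F, γ ≠ 0 → IsSlot β₁ γ → IsSlot β₂ γ) :
    BilinIsom F (bPf F β₁) (bPf F β₂) :=
  bilinIsom_of_isPureValue_mono hβ₁ h₂ fun d hd =>
    (hslots _ (mono_ne_zero hβ₁ d) (isSlot_mono hβ₁ hd)).isPureValue h₂

/-- two anisotropic bilinear `n`-fold Pfister forms with the same
1-fold Pfister factors (slots) are isometric. -/
theorem stmt_7 (F : Type*) [Field F] [CharP F 2] (n : ℕ)
    (β₁ β₂ : Fin n → F) (hβ₁ : ∀ i, β₁ i ≠ 0) (hβ₂ : ∀ i, β₂ i ≠ 0)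
    (h₁ : BAniso F (bPf F β₁)) (h₂ : BAniso F (bPf F β₂))
    (hslots : ∀ γ : F, γ ≠ 0 →
      ((∃ ψ : Fin (n - 1) → F, (∀ i, ψ i ≠ 0) ∧
          BilinIsom F (bPf F β₁) (bPf F (Fin.cons γ ψ))) ↔
        (∃ ψ : Fin (n - 1) → F, (∀ i, ψ i ≠ 0) ∧
          BilinIsom F (bPf F β₂) (bPf F (Fin.cons γ ψ))))) :
    BilinIsom F (bPf F β₁) (bPf F β₂) :=
  stmt_7_general hβ₁ h₂ fun γ hγ => (hslots γ hγ).mp
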